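/- Let (α, 𝔄) and (β, 𝔅) be standard Borel spaces. Then the Cartesian-product map, which sends a pair (D, E) consisting of a finite multiset D over α and a finite multiset E over β to the finite multiset D × E over α × β containing each pair (a, b) with multiplicity equal to the product of the multiplicities of a in D and b in E, is measurable with respect to the product σ-algebra 𝔠_α ⊗ 𝔠_β of the counting σ-algebras on the domain and the counting σ-algebra 𝔠_{α×β} (with respect to the product σ-algebra 𝔄 ⊗ 𝔅 on α × β) on the codomain. -/

import Mathlib

open MeasureTheory

/- `bagCount F D` is `|D|_F`: the number of elements of the finite bag (multiset) `D`
that lie in the set `F`, counted with multiplicity. -/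
open Classical in
noncomputable def bagCount {α : Type*} (F : Set α) (D : Multiset α) : ℕ :=
  Multiset.countP (fun a => a ∈ F) D

/-- The counting event `#(F, n)`: all finite bags `D` with `|D|_F = n`. -/
def countingEvent {α : Type*} (F : Set α) (n : ℕ) : Set (Multiset α) :=
  {D : Multiset α | bagCount F D = n}

/-- The counting σ-algebra `𝔠` on finite bags (multisets) over a measurable space `α`:
the σ-algebra generated by the counting events `#(F, n)` for measurable `F ⊆ α` and `n ∈ ℕ`. -/
def countingSigmaAlgebra (α : Type*) [MeasurableSpace α] : MeasurableSpace (Multiset α) :=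
  MeasurableSpace.generateFrom
    {A : Set (Multiset α) | ∃ (F : Set α) (n : ℕ), MeasurableSet F ∧ A = countingEvent F n}

/-!
A bag is recorded by the finite measure `∑ a ∈ D, δ_a`, whose value on a measurable set `F` is
`|D|_F`. Finite measures depend measurably on a parameter as soon as their values on a generating
π-system and their total mass do, so on a product space only rectangles need to be tested, and there
`|D × E|_(s × t) = |D|_s * |E|_t`.
-/

theorem bagCount_eq_sum_indicator {α : Type*} (F : Set α) (D : Multiset α) :
    bagCount F D = (D.map (F.indicator 1)).sum := by
  classical
  induction D using Multiset.induction_on with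
  | empty => simp [bagCount]
  | cons a D ih =>
    rw [Multiset.map_cons, Multiset.sum_cons, ← ih]
    simp [bagCount, Multiset.countP_cons, Set.indicator_apply, add_comm]

theorem bagCount_prod_product {α β : Type*} (s : Set α) (t : Set β) (D : Multiset α)
    (E : Multiset β) : bagCount (s ×ˢ t) (D ×ˢ E) = bagCount s D * bagCount t E := by
  calc bagCount (s ×ˢ t) (D ×ˢ E)
      = (D.map fun a ↦ (E.map fun b ↦ (s ×ˢ t).indicator 1 (a, b)).sum).sum := by
        rw [bagCount_eq_sum_indicator]
        simp [SProd.sprod, Multiset.product, Multiset.map_bind]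
    _ = (D.map (s.indicator 1)).sum * (E.map (t.indicator 1)).sum := by
        simp only [Set.indicator_prod_one, Multiset.sum_map_mul_left, Multiset.sum_map_mul_right]
    _ = bagCount s D * bagCount t E := by simp only [bagCount_eq_sum_indicator]

section Measurability

variable {α β Ω : Type*} [MeasurableSpace α] [MeasurableSpace β] [MeasurableSpace Ω]

/-- The counting measure of a bag: the sum of the Dirac measures at its elements, repeated according
to multiplicity. It brings the theory of finite measures to bear on `bagCount`. -/
noncomputable def bagMeasure (D : Multiset α) : Measure α :=
  (D.map Measure.dirac).sum

theorem bagMeasure_apply {F : Set α} (hF : MeasurableSet F) (D : Multiset α) :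
    bagMeasure D F = bagCount F D := by
  have dirac_apply_eq_cast (a : α) : Measure.dirac a F = ((F.indicator 1 a : ℕ) : ENNReal) := by
    by_cases ha : a ∈ F <;> simp [Measure.dirac_apply' a hF, ha]
  calc bagMeasure D F = (D.map fun a ↦ Measure.dirac a F).sum := by
        induction D using Multiset.induction_on with
        | empty => simp [bagMeasure]
        | cons a D ih => simpa [bagMeasure] using ih
    _ = bagCount F D := by
        simp [dirac_apply_eq_cast, bagCount_eq_sum_indicator, Nat.cast_multiset_sum]

instance isFiniteMeasure_bagMeasure (D : Multiset α) : IsFiniteMeasure (bagMeasure D) :=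
  ⟨by simp [bagMeasure_apply MeasurableSet.univ]⟩

theorem measurable_bagMeasure_apply_iff {f : Ω → Multiset α} {F : Set α} (hF : MeasurableSet F) :
    (Measurable fun ω ↦ bagMeasure (f ω) F) ↔ Measurable fun ω ↦ bagCount F (f ω) := by
  simp only [bagMeasure_apply hF]
  exact MeasurableEmbedding.natCast.measurable_comp_iff

attribute [local instance] countingSigmaAlgebra

theorem measurable_bagCount {F : Set α} (hF : MeasurableSet F) : Measurable (bagCount F) :=
  measurable_to_countable' fun n ↦ MeasurableSpace.measurableSet_generateFrom ⟨F, n, hF, rfl⟩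

theorem measurable_of_measurable_bagCount {f : Ω → Multiset α}
    (hf : ∀ F, MeasurableSet F → Measurable fun ω ↦ bagCount F (f ω)) : Measurable f := by
  refine measurable_generateFrom ?_
  rintro _ ⟨F, n, hF, rfl⟩
  exact hf F hF (measurableSet_singleton n)

theorem measurable_of_measurable_bagCount_of_isPiSystem {f : Ω → Multiset α} {S : Set (Set α)}
    (hgen : ‹MeasurableSpace α› = .generateFrom S) (hpi : IsPiSystem S)
    (hbasic : ∀ s ∈ S, Measurable fun ω ↦ bagCount s (f ω))
    (huniv : Measurable fun ω ↦ bagCount Set.univ (f ω)) : Measurable f := by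
  have measurableSet_of_mem : ∀ s ∈ S, MeasurableSet s := fun s hs ↦
    hgen ▸ MeasurableSpace.measurableSet_generateFrom hs
  have measurable_bagMeasure : Measurable fun ω ↦ bagMeasure (f ω) :=
    .measure_of_isPiSystem hgen hpi
      (fun s hs ↦ (measurable_bagMeasure_apply_iff (measurableSet_of_mem s hs)).2 (hbasic s hs))
      ((measurable_bagMeasure_apply_iff .univ).2 huniv)
  exact measurable_of_measurable_bagCount fun F hF ↦
    (measurable_bagMeasure_apply_iff hF).1 ((Measure.measurable_coe hF).comp measurable_bagMeasure)

theorem measurable_bagCount_prod_product {s : Set α} {t : Set β} (hs : MeasurableSet s)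
    (ht : MeasurableSet t) :
    Measurable fun p : Multiset α × Multiset β ↦ bagCount (s ×ˢ t) (p.1 ×ˢ p.2) := by
  simp only [bagCount_prod_product]
  exact ((measurable_bagCount hs).comp measurable_fst).mul
    ((measurable_bagCount ht).comp measurable_snd)

theorem measurable_bag_product_general :
    Measurable fun p : Multiset α × Multiset β ↦ p.1 ×ˢ p.2 := by
  refine measurable_of_measurable_bagCount_of_isPiSystem generateFrom_prod.symm isPiSystem_prod
    ?_ ?_
  · rintro _ ⟨s, hs, t, ht, rfl⟩
    exact measurable_bagCount_prod_product hs ht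
  · rw [← Set.univ_prod_univ]
    exact measurable_bagCount_prod_product .univ .univ

end Measurability

/-- For standard Borel spaces `α` and `β`, the Cartesian-product map,
sending a pair `(D, E)` of finite bags over `α` resp. `β` to the bag `D ×ˢ E` over
`α × β` (each pair `(a, b)` having multiplicity the product of the multiplicities of
`a` in `D` and `b` in `E`), is measurable w.r.t. the product of the counting
σ-algebras on the domain and the counting σ-algebra (over the product σ-algebra on
`α × β`) on the codomain. -/
theorem measurable_bag_product
    {α β : Type*} [MeasurableSpace α] [StandardBorelSpace α]
    [MeasurableSpace β] [StandardBorelSpace β] :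
    @Measurable (Multiset α × Multiset β) (Multiset (α × β))
      (@Prod.instMeasurableSpace _ _ (countingSigmaAlgebra α) (countingSigmaAlgebra β))
      (countingSigmaAlgebra (α × β))
      (fun p : Multiset α × Multiset β => p.1 ×ˢ p.2) :=
  measurable_bag_product_general
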